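/- arXiv:2002.04681 — 2 statements merged into one kernel-verified Lean document; each statement's English description precedes it below -/
import Mathlib

section
/- 𝓗 equals the set of all (x, X, y, Y₁₂) for which there exist α ∈ ℝ² and β ∈ ℝ² such that: (i) x ≤ y componentwise; (ii) the 3×3 symmetric matrix [[Y₁₂, (x−α)ᵀ], [x−α, X−Diag(β)]] is positive semidefinite and lies in RLT_x; (iii) (α_j, β_j, y_j − Y₁₂) ∈ PER for j = 1, 2; and (iv) (y, Y₁₂) ∈ RLT_y. -/
open Matrix

/-- The perspective cone PER = {(a, b, c) : a² ≤ b·c, 0 ≤ b ≤ a ≤ c}. -/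
def PER : Set (ℝ × ℝ × ℝ) :=
  {p | p.1 ^ 2 ≤ p.2.1 * p.2.2 ∧ 0 ≤ p.2.1 ∧ p.2.1 ≤ p.1 ∧ p.1 ≤ p.2.2}

/-- RLT_x : symmetric 3×3 matrices [[λ, xᵀ],[x, X]] with λ ≥ 0, 0 ≤ diag(X) ≤ x,
max{0, x₁+x₂−λ} ≤ X₁₂ ≤ min{x₁, x₂}. -/
def RLTx : Set (Matrix (Fin 3) (Fin 3) ℝ) :=
  {M | M.IsSymm ∧ 0 ≤ M 0 0 ∧
    0 ≤ M 1 1 ∧ M 1 1 ≤ M 0 1 ∧ 0 ≤ M 2 2 ∧ M 2 2 ≤ M 0 2 ∧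
    max 0 (M 0 1 + M 0 2 - M 0 0) ≤ M 1 2 ∧ M 1 2 ≤ min (M 0 1) (M 0 2)}

/-- RLT_y = {(y, Y₁₂) : max{0, y₁+y₂−1} ≤ Y₁₂ ≤ min{y₁, y₂}}. -/
def RLTy : Set ((Fin 2 → ℝ) × ℝ) :=
  {p | max 0 (p.1 0 + p.1 1 - 1) ≤ p.2 ∧ p.2 ≤ min (p.1 0) (p.1 1)}

/-- 𝓗 = conv{(x, xxᵀ, y, y₁y₂) : 0 ≤ x ≤ y, y ∈ {0,1}²}. -/
def Hset : Set ((Fin 2 → ℝ) × Matrix (Fin 2) (Fin 2) ℝ × (Fin 2 → ℝ) × ℝ) :=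
  convexHull ℝ {p | ∃ x y : Fin 2 → ℝ,
    (∀ i, 0 ≤ x i) ∧ (∀ i, x i ≤ y i) ∧ (∀ i, y i = 0 ∨ y i = 1) ∧
    p = (x, Matrix.vecMulVec x x, y, y 0 * y 1)}

/-- The quadratic form of the 3×3 symmetric matrix [[l,a,b],[a,A,C],[b,C,B]] is nonnegative. -/
def QF (l a b A B C : ℝ) : Prop :=
  ∀ p q r : ℝ, 0 ≤ l * p ^ 2 + 2 * a * p * q + 2 * b * p * r + A * q ^ 2 + 2 * C * q * r + B * r ^ 2

lemma psd_iff_QF (l a b A B C : ℝ) :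
    (!![l, a, b; a, A, C; b, C, B] : Matrix (Fin 3) (Fin 3) ℝ).PosSemidef ↔ QF l a b A B C := by
  rw [Matrix.posSemidef_iff_dotProduct_mulVec]
  constructor
  · rintro ⟨-, h⟩ p q r
    have := h ![p, q, r]
    simp [Matrix.mulVec, dotProduct, Fin.sum_univ_three] at this
    linarith
  · intro h
    refine ⟨?_, fun v => ?_⟩
    · ext i j
      fin_cases i <;> fin_cases j <;> simp
    · have := h (v 0) (v 1) (v 2)
      simp [Matrix.mulVec, dotProduct, Fin.sum_univ_three]
      linarith

/-- Additive predicates containing the moment curve of the segment. -/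
structure C1 (R : ℝ → ℝ → ℝ → Prop) : Prop where
  add : ∀ {c a b c' a' b'}, R c a b → R c' a' b' → R (c + c') (a + a') (b + b')
  gen : ∀ l s, 0 ≤ l → 0 ≤ s → s ≤ 1 → R l (l * s) (l * s ^ 2)

lemma C1.mem {R} (h : C1 R) {c a b : ℝ} (h1 : a ^ 2 ≤ b * c) (h2 : 0 ≤ b) (h3 : b ≤ a)
    (h4 : a ≤ c) : R c a b := by
  rcases (h2.trans h3).eq_or_lt with h0 | h0
  · have hb : b = 0 := by linarith
    subst hb
    have := h.gen c 0 (by linarith) le_rfl zero_le_one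
    simpa [← h0] using this
  · have hb : 0 < b := by
      rcases h2.eq_or_lt with h5 | h5
      · subst h5; nlinarith
      · exact h5
    have e1 := h.gen (a ^ 2 / b) (b / a) (by positivity) (by positivity)
      (by rw [div_le_one h0]; exact h3)
    have e2 := h.gen (c - a ^ 2 / b) 0
      (by rw [sub_nonneg, div_le_iff₀ hb]; linarith) le_rfl zero_le_one
    have := h.add e1 e2
    convert this using 1 <;> field_simp <;> ring

/-- Additive predicates containing the moment surface of the square. -/
structure C2 (Q : ℝ → ℝ → ℝ → ℝ → ℝ → ℝ → Prop) : Prop where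
  add : ∀ {l a b A B C l' a' b' A' B' C'}, Q l a b A B C → Q l' a' b' A' B' C' →
    Q (l + l') (a + a') (b + b') (A + A') (B + B') (C + C')
  gen : ∀ l u v, 0 ≤ l → 0 ≤ u → u ≤ 1 → 0 ≤ v → v ≤ 1 →
    Q l (l * u) (l * v) (l * u ^ 2) (l * v ^ 2) (l * (u * v))

lemma C2.swap {Q} (h : C2 Q) : C2 (fun l a b A B C => Q l b a B A C) where
  add h1 h2 := h.add h1 h2
  gen l u v hl hu hu' hv hv' := by
    have := h.gen l v u hl hv hv' hu hu'
    rwa [mul_comm v u] at this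

lemma C2.flip {Q} (h : C2 Q) :
    C2 (fun l a b A B C => Q l (l - a) b (l - 2 * a + A) B (b - C)) where
  add h1 h2 := by
    have := h.add h1 h2
    convert this using 1 <;> ring
  gen l u v hl hu hu' hv hv' := by
    have := h.gen l (1 - u) v hl (by linarith) (by linarith) hv hv'
    convert this using 1 <;> ring

/-- PSD plus RLT. -/
structure DN (l a b A B C : ℝ) : Prop where
  qf : QF l a b A B C
  hA : A ≤ a
  hB : B ≤ b
  hC : 0 ≤ C
  haC : C ≤ a
  hbC : C ≤ b
  hl : a + b - l ≤ C

lemma DN.swap {l a b A B C : ℝ} (h : DN l a b A B C) : DN l b a B A C where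
  qf p q r := by have := h.qf p r q; linarith
  hA := h.hB
  hB := h.hA
  hC := h.hC
  haC := h.hbC
  hbC := h.haC
  hl := by linarith [h.hl]

lemma DN.flip {l a b A B C : ℝ} (h : DN l a b A B C) :
    DN l (l - a) b (l - 2 * a + A) B (b - C) where
  qf p q r := by have := h.qf (p + q) (-q) r; linarith
  hA := by linarith [h.hA]
  hB := h.hB
  hC := by linarith [h.hbC]
  haC := by linarith [h.hl]
  hbC := by linarith [h.hC]
  hl := by linarith [h.haC]

lemma DN.A0 {l a b A B C : ℝ} (h : DN l a b A B C) : 0 ≤ A := by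
  have := h.qf 0 1 0; linarith

lemma DN.B0 {l a b A B C : ℝ} (h : DN l a b A B C) : 0 ≤ B := by
  have := h.qf 0 0 1; linarith

lemma case_bin {Q} (hQ : C2 Q) {l a b A B C : ℝ} (h : DN l a b A B C) (e : A = a) :
    Q l a b A B C := by
  subst e
  have e1 : C1 (fun c α β => Q c c α c β α) :=
    ⟨fun h1 h2 => hQ.add h1 h2, fun l s hl hs hs' => by
      have := hQ.gen l 1 s hl zero_le_one le_rfl hs hs'
      convert this using 1 <;> ring⟩
  have e0 : C1 (fun c α β => Q c 0 α 0 β 0) :=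
    ⟨fun h1 h2 => by simpa using hQ.add h1 h2, fun l s hl hs hs' => by
      have := hQ.gen l 0 s hl le_rfl zero_le_one hs hs'
      convert this using 1 <;> ring⟩
  obtain ⟨qf, -, hB, hC, haC, hbC, hl⟩ := h
  have key : ∀ C a : ℝ, 0 ≤ C → C ≤ a →
      ∃ m g, 0 ≤ m ∧ m ≤ C ∧ C ^ 2 ≤ m * a ∧ a * g ^ 2 + 2 * C * g = -m := by
    intro C a h0 h1
    rcases (h0.trans h1).eq_or_lt with h2 | h2
    · have : C = 0 := by linarith
      subst this
      exact ⟨0, 0, by simp⟩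
    · refine ⟨C ^ 2 / a, -C / a, by positivity, ?_, ?_, ?_⟩
      · rw [div_le_iff₀ h2]; nlinarith
      · rw [div_mul_cancel₀ _ h2.ne']
      · field_simp; ring
  obtain ⟨m1, g, m10, m1C, hm1, hg⟩ := key C A hC haC
  obtain ⟨m2, k, m20, m2C, hm2, hk⟩ := key (b - C) (l - A) (by linarith) (by linarith)
  have hs : m1 + m2 ≤ B := by
    have := qf k (g - k) 1
    nlinarith
  obtain ⟨b1, hb1, hb1', hb2, hb2'⟩ : ∃ b1, m1 ≤ b1 ∧ b1 ≤ C ∧ m2 ≤ B - b1 ∧ B - b1 ≤ b - C := by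
    rcases le_total C (B - m2) with h | h
    · exact ⟨C, by linarith, by linarith, by linarith, by linarith⟩
    · exact ⟨B - m2, by linarith, by linarith, by linarith, by linarith⟩
  have r1 := e1.mem (c := A) (a := C) (b := b1) (by nlinarith) (by linarith) hb1' haC
  have r0 := e0.mem (c := l - A) (a := b - C) (b := B - b1) (by nlinarith) (by linarith) hb2'
    (by linarith)
  have := hQ.add r1 r0
  convert this using 1 <;> ring

lemma case_zero {Q} (hQ : C2 Q) {l a b A B C : ℝ} (h : DN l a b A B C) (e : C = 0) :
    Q l a b A B C := by
  subst e
  have e1 : C1 (fun c α β => Q c α 0 β 0 0) :=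
    ⟨fun h1 h2 => by simpa using hQ.add h1 h2, fun l s hl hs hs' => by
      have := hQ.gen l s 0 hl hs hs' le_rfl zero_le_one
      convert this using 1 <;> ring⟩
  have e0 : C1 (fun c α β => Q c 0 α 0 β 0) :=
    ⟨fun h1 h2 => by simpa using hQ.add h1 h2, fun l s hl hs hs' => by
      have := hQ.gen l 0 s hl le_rfl zero_le_one hs hs'
      convert this using 1 <;> ring⟩
  have key : ∀ a A : ℝ, 0 ≤ A → A ≤ a → (A = 0 → a = 0) →
      ∃ c g, a ≤ c ∧ a ^ 2 ≤ A * c ∧ 2 * a * g + A * g ^ 2 = -c := by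
    intro a A h0 h1 h2
    rcases h0.eq_or_lt with h3 | h3
    · have := h2 h3.symm
      subst this
      exact ⟨0, 0, by simp⟩
    · refine ⟨a ^ 2 / A, -a / A, ?_, ?_, ?_⟩
      · rw [le_div_iff₀ h3]; nlinarith
      · rw [mul_div_cancel₀ _ h3.ne']
      · field_simp; ring
  have hA0 := h.A0
  have hB0 := h.B0
  obtain ⟨qf, hA, hB, hC, haC, hbC, hl⟩ := h
  have za : A = 0 → a = 0 := by
    rintro rfl
    by_contra hne
    have hp : 0 < a := lt_of_le_of_ne haC (Ne.symm hne)
    have := qf 1 (-(l + 1) / (2 * a)) 0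
    have e : 2 * a * (-(l + 1) / (2 * a)) = -(l + 1) := by field_simp
    nlinarith
  have zb : B = 0 → b = 0 := by
    rintro rfl
    by_contra hne
    have hp : 0 < b := lt_of_le_of_ne hbC (Ne.symm hne)
    have := qf 1 0 (-(l + 1) / (2 * b))
    have e : 2 * b * (-(l + 1) / (2 * b)) = -(l + 1) := by field_simp
    nlinarith
  obtain ⟨c1, g, h1, h2, h3⟩ := key a A hA0 hA za
  obtain ⟨c2, k, h4, h5, h6⟩ := key b B hB0 hB zb
  have hs := qf 1 g k
  have r1 := e1.mem h2 hA0 hA h1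
  have r0 := e0.mem h5 hB0 hB h4
  have r := hQ.gen (l - c1 - c2) 0 0 (by nlinarith) le_rfl zero_le_one le_rfl zero_le_one
  have := hQ.add (hQ.add r1 r0) r
  convert this using 1 <;> ring

lemma unflip {Q : ℝ → ℝ → ℝ → ℝ → ℝ → ℝ → Prop} {l a b A B C : ℝ}
    (h : Q l (l - (l - a)) b (l - 2 * (l - a) + (l - 2 * a + A)) B (b - (b - C))) :
    Q l a b A B C := by
  convert h using 1 <;> ring

lemma case_any {Q} (hQ : C2 Q) {l a b A B C : ℝ} (h : DN l a b A B C)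
    (e : (a - A) * (b - B) * C * (a - C) * (b - C) * (l - a - b + C) = 0) :
    Q l a b A B C := by
  simp only [mul_eq_zero] at e
  rcases e with ((((e | e) | e) | e) | e) | e
  · exact case_bin hQ h (by linarith)
  · exact case_bin hQ.swap h.swap (by linarith)
  · exact case_zero hQ h e
  · have := case_zero hQ.swap.flip h.swap.flip (by linarith)
    exact unflip (Q := fun l a b A B C => Q l b a B A C) this
  · have := case_zero hQ.flip h.flip (by linarith)
    exact unflip this
  · have h1 := case_zero hQ.flip.swap.flip.swap h.flip.swap.flip.swap (by linarith)
    convert h1 using 1 <;> ring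

lemma box_main {Q} (hQ : C2 Q) {l a b A B C : ℝ} (h : DN l a b A B C) : Q l a b A B C := by
  have hA0 := h.A0
  have hB0 := h.B0
  have h' := h
  obtain ⟨qf, hA, hB, hC, haC, hbC, hl⟩ := h'
  have hl0 : 0 ≤ l := by linarith
  rcases hl0.eq_or_lt with h0 | h0
  · subst h0
    refine case_any hQ h ?_
    have : a = 0 := by linarith
    have : A = 0 := by linarith
    simp [*]
  -- subtract `t` times the rank one matrix of the mean
  obtain ⟨x, hx⟩ : ∃ x, a = l * x := ⟨a / l, by field_simp⟩
  obtain ⟨y, hy⟩ : ∃ y, b = l * y := ⟨b / l, by field_simp⟩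
  subst hx hy
  have hx0 : 0 ≤ x := by by_contra hh; push Not at hh; nlinarith
  have hy0 : 0 ≤ y := by by_contra hh; push Not at hh; nlinarith
  have hx1 : x ≤ 1 := by by_contra hh; push Not at hh; nlinarith
  have hy1 : y ≤ 1 := by by_contra hh; push Not at hh; nlinarith
  let f1 : ℝ → ℝ := fun t => (l * x - A) - t * (l * x - l * x ^ 2)
  let f2 : ℝ → ℝ := fun t => (l * y - B) - t * (l * y - l * y ^ 2)
  let f3 : ℝ → ℝ := fun t => C - t * (l * (x * y))
  let f4 : ℝ → ℝ := fun t => (l * x - C) - t * (l * x - l * (x * y))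
  let f5 : ℝ → ℝ := fun t => (l * y - C) - t * (l * y - l * (x * y))
  let f6 : ℝ → ℝ := fun t => (l - l * x - l * y + C) - t * (l - l * x - l * y + l * (x * y))
  let g : ℝ → ℝ := fun t => min (f1 t) (min (f2 t) (min (f3 t) (min (f4 t) (min (f5 t) (f6 t)))))
  have hg : Continuous g := by fun_prop
  have g0 : 0 ≤ g 0 := by
    simp only [g, f1, f2, f3, f4, f5, f6, le_min_iff]
    refine ⟨?_, ?_, ?_, ?_, ?_, ?_⟩ <;> linarith
  have g1 : g 1 ≤ 0 := by
    refine (min_le_left _ _).trans ?_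
    have := qf (-x) 1 0
    simp only [f1]
    nlinarith
  obtain ⟨t, ⟨ht0, ht1⟩, ht⟩ := intermediate_value_Icc' zero_le_one hg.continuousOn ⟨g1, g0⟩
  have hge : 0 ≤ g t := ht.ge
  simp only [g, le_min_iff] at hge
  obtain ⟨k1, k2, k3, k4, k5, k6⟩ := hge
  have hprod : f1 t * f2 t * f3 t * f4 t * f5 t * f6 t = 0 := by
    simp only [mul_eq_zero]
    by_contra hne
    push Not at hne
    obtain ⟨⟨⟨⟨⟨n1, n2⟩, n3⟩, n4⟩, n5⟩, n6⟩ := hne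
    have : 0 < g t := by
      simp only [g, lt_min_iff]
      exact ⟨k1.lt_of_ne' n1, k2.lt_of_ne' n2, k3.lt_of_ne' n3, k4.lt_of_ne' n4,
        k5.lt_of_ne' n5, k6.lt_of_ne' n6⟩
    linarith
  simp only [f1, f2, f3, f4, f5, f6] at k1 k2 k3 k4 k5 k6 hprod
  have hD : DN (l - t * l) (l * x - t * (l * x)) (l * y - t * (l * y)) (A - t * (l * x ^ 2))
      (B - t * (l * y ^ 2)) (C - t * (l * (x * y))) := by
    refine ⟨fun p q r => ?_, ?_, ?_, ?_, ?_, ?_, ?_⟩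
    · have i1 := mul_nonneg (sub_nonneg.2 ht1) (qf p q r)
      have i2 := mul_nonneg ht0 (qf (-(x * q + y * r)) q r)
      linarith
    all_goals linarith
  have r1 := case_any hQ hD (by rw [← hprod]; ring)
  have r2 := hQ.gen (t * l) x y (by positivity) hx0 hx1 hy0 hy1
  have := hQ.add r1 r2
  convert this using 1 <;> ring

abbrev EE := (Fin 2 → ℝ) × Matrix (Fin 2) (Fin 2) ℝ × (Fin 2 → ℝ) × ℝ

/-- The homogenization of `Hset`. -/
def KH (l : ℝ) (v : EE) : Prop := 0 ≤ l ∧ ∃ c ∈ Hset, v = l • c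

lemma KH.add {l l' : ℝ} {v v' : EE} (h : KH l v) (h' : KH l' v') : KH (l + l') (v + v') := by
  obtain ⟨hl, c, hc, rfl⟩ := h
  obtain ⟨hl', c', hc', rfl⟩ := h'
  refine ⟨add_nonneg hl hl', ?_⟩
  rcases (add_nonneg hl hl').eq_or_lt with h0 | h0
  · have e1 : l = 0 := by linarith
    have e2 : l' = 0 := by linarith
    subst e1 e2
    exact ⟨c, hc, by simp⟩
  · refine ⟨(l / (l + l')) • c + (l' / (l + l')) • c', ?_, ?_⟩
    · exact (convex_convexHull ℝ _) hc hc' (by positivity) (by positivity) (by field_simp)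
    · rw [smul_add, smul_smul, smul_smul, mul_div_cancel₀ _ h0.ne', mul_div_cancel₀ _ h0.ne']

def vv (a b A B C y z Y : ℝ) : EE := (![a, b], !![A, C; C, B], ![y, z], Y)

lemma vv_add (a b A B C y z Y a' b' A' B' C' y' z' Y' : ℝ) :
    vv a b A B C y z Y + vv a' b' A' B' C' y' z' Y' =
      vv (a + a') (b + b') (A + A') (B + B') (C + C') (y + y') (z + z') (Y + Y') := by
  simp [vv]

lemma KH.gen (l u v y z : ℝ) (hl : 0 ≤ l) (hu : 0 ≤ u) (hv : 0 ≤ v) (huy : u ≤ y) (hvz : v ≤ z)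
    (hy : y = 0 ∨ y = 1) (hz : z = 0 ∨ z = 1) :
    KH l (vv (l * u) (l * v) (l * u ^ 2) (l * v ^ 2) (l * (u * v)) (l * y) (l * z)
      (l * (y * z))) := by
  refine ⟨hl, vv u v (u ^ 2) (v ^ 2) (u * v) y z (y * z), ?_, ?_⟩
  · apply subset_convexHull
    refine ⟨![u, v], ![y, z], ?_, ?_, ?_, ?_⟩
    · simp [Fin.forall_fin_two, *]
    · simp [Fin.forall_fin_two, *]
    · simp [Fin.forall_fin_two, *]
    · simp only [vv, Prod.mk.injEq]
      refine ⟨trivial, ?_, trivial, by simp⟩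
      ext i j
      fin_cases i <;> fin_cases j <;> simp [Matrix.vecMulVec] <;> ring
  · simp [vv]

lemma KH.one {v : EE} (h : KH 1 v) : v ∈ Hset := by
  obtain ⟨-, c, hc, rfl⟩ := h
  simpa using hc

lemma c2_KH : C2 (fun l a b A B C => KH l (vv a b A B C l l l)) where
  add h1 h2 := by
    have := h1.add h2
    rwa [vv_add] at this
  gen l u v hl hu hu' hv hv' := by
    have := KH.gen l u v 1 1 hl hu hv hu' hv' (Or.inr rfl) (Or.inr rfl)
    simpa using this

lemma c1_KH0 : C1 (fun c α β => KH c (vv α 0 β 0 0 c 0 0)) where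
  add h1 h2 := by
    have := h1.add h2
    rw [vv_add] at this
    simpa using this
  gen l u hl hu hu' := by
    have := KH.gen l u 0 1 0 hl hu le_rfl hu' le_rfl (Or.inr rfl) (Or.inl rfl)
    simpa using this

lemma c1_KH1 : C1 (fun c α β => KH c (vv 0 α 0 β 0 0 c 0)) where
  add h1 h2 := by
    have := h1.add h2
    rw [vv_add] at this
    simpa using this
  gen l u hl hu hu' := by
    have := KH.gen l 0 u 0 1 hl le_rfl hu le_rfl hu' (Or.inl rfl) (Or.inr rfl)
    simpa using this

lemma per_add {a b c a' b' c' s t : ℝ} (hs : 0 ≤ s) (ht : 0 ≤ t)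
    (h : a ^ 2 ≤ b * c ∧ 0 ≤ b ∧ b ≤ a ∧ a ≤ c) (h' : a' ^ 2 ≤ b' * c' ∧ 0 ≤ b' ∧ b' ≤ a' ∧ a' ≤ c') :
    (s * a + t * a') ^ 2 ≤ (s * b + t * b') * (s * c + t * c') ∧ 0 ≤ s * b + t * b' ∧
      s * b + t * b' ≤ s * a + t * a' ∧ s * a + t * a' ≤ s * c + t * c' := by
  obtain ⟨h1, h2, h3, h4⟩ := h
  obtain ⟨k1, k2, k3, k4⟩ := h'
  refine ⟨?_, by positivity, by gcongr, by gcongr⟩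
  have hb : 2 * (a * a') ≤ b * c' + b' * c := by
    have hm : (a * a') ^ 2 ≤ (b * c') * (b' * c) := by
      have := mul_le_mul h1 k1 (sq_nonneg _) (by nlinarith [sq_nonneg a])
      linarith
    have hc : 0 ≤ c := by linarith
    have hc' : 0 ≤ c' := by linarith
    have p1 : 0 ≤ b * c' := by positivity
    have p2 : 0 ≤ b' * c := by positivity
    refine abs_le_of_sq_le_sq' ?_ (by positivity) |>.2
    nlinarith [sq_nonneg (b * c' - b' * c)]
  have := mul_le_mul_of_nonneg_left hb (mul_nonneg hs ht)
  have := mul_le_mul_of_nonneg_left h1 (mul_nonneg hs hs)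
  have := mul_le_mul_of_nonneg_left k1 (mul_nonneg ht ht)
  linarith

/-- The right-hand side in coordinates. -/
def RR (p : EE) : Prop :=
  p.2.1 1 0 = p.2.1 0 1 ∧ ∃ a b A B : ℝ, p.1 0 ≤ p.2.2.1 0 ∧ p.1 1 ≤ p.2.2.1 1 ∧
    DN p.2.2.2 (p.1 0 - a) (p.1 1 - b) (p.2.1 0 0 - A) (p.2.1 1 1 - B) (p.2.1 0 1) ∧
    (a ^ 2 ≤ A * (p.2.2.1 0 - p.2.2.2) ∧ 0 ≤ A ∧ A ≤ a ∧ a ≤ p.2.2.1 0 - p.2.2.2) ∧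
    (b ^ 2 ≤ B * (p.2.2.1 1 - p.2.2.2) ∧ 0 ≤ B ∧ B ≤ b ∧ b ≤ p.2.2.1 1 - p.2.2.2) ∧
    p.2.2.1 0 + p.2.2.1 1 - 1 ≤ p.2.2.2

lemma RR_convex : Convex ℝ {p | RR p} := by
  rintro p ⟨hp, a, b, A, B, h1, h2, h3, h4, h5, h6⟩ p' ⟨hp', a', b', A', B', k1, k2, k3, k4, k5, k6⟩
    s t hs ht hst
  obtain ⟨q1, q2, q3, q4, q5, q6, q7⟩ := h3
  obtain ⟨r1, r2, r3, r4, r5, r6, r7⟩ := k3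
  have L : ∀ {u v u' v' : ℝ}, u ≤ v → u' ≤ v' → s * u + t * u' ≤ s * v + t * v' := by
    intro u v u' v' h h'
    gcongr
  refine ⟨?_, s * a + t * a', s * b + t * b', s * A + t * A', s * B + t * B', ?_, ?_, ?_, ?_, ?_, ?_⟩
    <;> simp only [Prod.fst_add, Prod.snd_add, Prod.smul_fst, Prod.smul_snd, Pi.add_apply,
      Pi.smul_apply, Matrix.add_apply, Matrix.smul_apply, smul_eq_mul]
  · rw [hp, hp']
  · exact L h1 k1
  · exact L h2 k2
  · refine ⟨fun x y z => ?_, ?_, ?_, ?_, ?_, ?_, ?_⟩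
    · have := L (q1 x y z) (r1 x y z)
      linarith
    · linarith [L q2 r2]
    · linarith [L q3 r3]
    · linarith [L q4 r4]
    · linarith [L q5 r5]
    · linarith [L q6 r6]
    · linarith [L q7 r7]
  · convert per_add hs ht h4 k4 using 3 <;> ring_nf
  · convert per_add hs ht h5 k5 using 3 <;> ring_nf
  · have := L h6 k6
    linarith

lemma RR_gen (x y : Fin 2 → ℝ) (h0 : ∀ i, 0 ≤ x i) (h1 : ∀ i, x i ≤ y i)
    (h2 : ∀ i, y i = 0 ∨ y i = 1) : RR (x, Matrix.vecMulVec x x, y, y 0 * y 1) := by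
  have a0 := h0 0
  have a1 := h0 1
  have b0 := h1 0
  have b1 := h1 1
  refine ⟨by simp [Matrix.vecMulVec, mul_comm], ?_⟩
  simp only [Matrix.vecMulVec_apply]
  generalize x 0 = u at *
  generalize x 1 = v at *
  rcases h2 0 with e0 | e0 <;> rcases h2 1 with e1 | e1 <;> rw [e0] at b0 ⊢ <;> rw [e1] at b1 ⊢
  · have : u = 0 := by linarith
    have : v = 0 := by linarith
    subst u v
    refine ⟨0, 0, 0, 0, ?_⟩
    simp
    refine ⟨fun p q r => ?_, ?_, ?_, ?_, ?_, ?_, ?_⟩ <;> norm_num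
  · have : u = 0 := by linarith
    subst u
    refine ⟨0, v, 0, v * v, by simp, by simpa, ?_, ?_, ?_, by simp⟩
    · refine ⟨fun p q r => ?_, ?_, ?_, ?_, ?_, ?_, ?_⟩ <;> norm_num
    · simp
    · refine ⟨?_, ?_, ?_, ?_⟩ <;> nlinarith
  · have : v = 0 := by linarith
    subst v
    refine ⟨u, 0, u * u, 0, by simpa, by simp, ?_, ?_, ?_, by simp⟩
    · refine ⟨fun p q r => ?_, ?_, ?_, ?_, ?_, ?_, ?_⟩ <;> norm_num
    · refine ⟨?_, ?_, ?_, ?_⟩ <;> nlinarith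
    · simp
  · refine ⟨0, 0, 0, 0, by simpa, by simpa, ?_, by simp, by simp, by norm_num⟩
    refine ⟨fun p q r => ?_, ?_, ?_, ?_, ?_, ?_, ?_⟩
    · have := sq_nonneg (p + u * q + v * r)
      linarith
    all_goals nlinarith

lemma RR_mem (p : EE) (h : RR p) : p ∈ Hset := by
  obtain ⟨x, X, y, Y⟩ := p
  obtain ⟨hs, a, b, A, B, h1, h2, h3, h4, h5, h6⟩ := h
  simp only at hs h1 h2 h3 h4 h5 h6
  have r := box_main c2_KH h3
  have r0 := c1_KH0.mem h4.1 h4.2.1 h4.2.2.1 h4.2.2.2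
  have r1 := c1_KH1.mem h5.1 h5.2.1 h5.2.2.1 h5.2.2.2
  have rz := KH.gen (1 - y 0 - y 1 + Y) 0 0 0 0 (by linarith) le_rfl le_rfl le_rfl le_rfl
    (Or.inl rfl) (Or.inl rfl)
  have := ((r.add r0).add r1).add rz
  simp only [vv_add] at this
  apply KH.one
  convert this using 1
  · ring
  · simp only [vv, Prod.mk.injEq]
    refine ⟨?_, ?_, ?_, by ring⟩
    · ext i; fin_cases i <;> simp
    · ext i j; fin_cases i <;> fin_cases j <;> simp [hs]
    · ext i; fin_cases i <;> simp

lemma H_eq : Hset = {p | RR p} := by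
  apply Set.Subset.antisymm
  · refine convexHull_min ?_ RR_convex
    rintro p ⟨x, y, h0, h1, h2, rfl⟩
    exact RR_gen x y h0 h1 h2
  · exact fun p hp => RR_mem p hp

/-- Disjunctive representation of 𝓗 (Theorem 2 of the paper). -/
theorem stmt3 :
    Hset = {p : (Fin 2 → ℝ) × Matrix (Fin 2) (Fin 2) ℝ × (Fin 2 → ℝ) × ℝ |
      p.2.1.IsSymm ∧ ∃ α β : Fin 2 → ℝ,
        (∀ i, p.1 i ≤ p.2.2.1 i) ∧
        ((!![p.2.2.2, p.1 0 - α 0, p.1 1 - α 1;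
             p.1 0 - α 0, p.2.1 0 0 - β 0, p.2.1 0 1;
             p.1 1 - α 1, p.2.1 1 0, p.2.1 1 1 - β 1] :
            Matrix (Fin 3) (Fin 3) ℝ).PosSemidef ∧
          (!![p.2.2.2, p.1 0 - α 0, p.1 1 - α 1;
              p.1 0 - α 0, p.2.1 0 0 - β 0, p.2.1 0 1;
              p.1 1 - α 1, p.2.1 1 0, p.2.1 1 1 - β 1] :
            Matrix (Fin 3) (Fin 3) ℝ) ∈ RLTx) ∧
        (∀ j : Fin 2, (α j, β j, p.2.2.1 j - p.2.2.2) ∈ PER) ∧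
        (p.2.2.1, p.2.2.2) ∈ RLTy} := by
  rw [H_eq]
  ext ⟨x, X, y, Y⟩
  simp only [Set.mem_setOf_eq, RR]
  constructor
  · rintro ⟨hs, a, b, A, B, h1, h2, h3, h4, h5, h6⟩
    refine ⟨?_, ![a, b], ![A, B], ?_, ⟨?_, ?_⟩, ?_, ?_⟩
    · ext i j; fin_cases i <;> fin_cases j <;> simp [hs]
    · simp [Fin.forall_fin_two, *]
    · rw [hs]; simpa using (psd_iff_QF _ _ _ _ _ _).2 h3.qf
    · have := h3.A0
      have := h3.B0
      obtain ⟨q1, q2, q3, q4, q5, q6, q7⟩ := h3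
      refine ⟨?_, ?_⟩
      · ext i j; fin_cases i <;> fin_cases j <;> simp [hs]
      · simp
        refine ⟨?_, ?_, ?_, ?_, ?_, ⟨?_, ?_⟩, ?_, ?_⟩ <;> linarith
    · simp [Fin.forall_fin_two, PER]
      exact ⟨h4, h5⟩
    · obtain ⟨q1, q2, q3, q4, q5, q6, q7⟩ := h3
      simp only [RLTy, Set.mem_setOf_eq, max_le_iff, le_min_iff]
      refine ⟨⟨?_, ?_⟩, ?_, ?_⟩ <;> linarith
  · rintro ⟨hs, α, β, h1, ⟨h2, h3⟩, h4, h5⟩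
    have hs' : X 1 0 = X 0 1 := hs.apply 0 1
    rw [hs'] at h2 h3
    rw [psd_iff_QF] at h2
    obtain ⟨-, h3⟩ := h3
    simp at h3
    have p0 := h4 0
    have p1 := h4 1
    simp only [RLTy, Set.mem_setOf_eq, max_le_iff, le_min_iff] at h5
    refine ⟨hs', α 0, α 1, β 0, β 1, h1 0, h1 1, ⟨h2, ?_, ?_, ?_, ?_, ?_, ?_⟩, p0, p1, h5.1.2⟩
      <;> linarith [h3.2.2.1, h3.2.2.2.2.1, h3.2.2.2.2.2.1.1, h3.2.2.2.2.2.1.2,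
        h3.2.2.2.2.2.2.1, h3.2.2.2.2.2.2.2]
end

section
/- 𝓗 equals the set of all (x, X, y, Y₁₂) for which there exists α ∈ ℝ² such that (x, X, y, Y₁₂, α) satisfies the linear conditions (L) and the PSD conditions (P3), (P4a), (P4b), and (P5). -/
open Matrix

set_option linter.unusedVariables false

/-- Linear conditions (L). -/
def Lcond (x1 x2 X11 X12 X22 y1 y2 Y12 a1 a2 : ℝ) : Prop :=
  X11 ≤ x1 ∧ x1 ≤ y1 ∧ X22 ≤ x2 ∧ x2 ≤ y2 ∧
  max 0 (x1 - a1 + x2 - a2 - Y12) ≤ X12 ∧ X12 ≤ min (x1 - a1) (x2 - a2) ∧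
  0 ≤ a1 ∧ a1 ≤ y1 - Y12 ∧ 0 ≤ a2 ∧ a2 ≤ y2 - Y12 ∧
  max 0 (y1 + y2 - 1) ≤ Y12 ∧ Y12 ≤ min y1 y2

/-- PSD condition (P3). -/
def P3cond (x1 x2 X11 X12 X22 y1 y2 Y12 a1 a2 : ℝ) : Prop :=
  (!![Y12, x1 - a1, x2 - a2;
      x1 - a1, x1 - a1, X12;
      x2 - a2, X12, x2 - a2] : Matrix (Fin 3) (Fin 3) ℝ).PosSemidef

/-- PSD condition (P4a). -/
def P4acond (x1 x2 X11 X12 X22 y1 y2 Y12 a1 a2 : ℝ) : Prop :=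
  (!![y1 - Y12, 0, a1, 0;
      0, Y12, x1 - a1, x2 - a2;
      a1, x1 - a1, X11, X12;
      0, x2 - a2, X12, x2 - a2] : Matrix (Fin 4) (Fin 4) ℝ).PosSemidef

/-- PSD condition (P4b). -/
def P4bcond (x1 x2 X11 X12 X22 y1 y2 Y12 a1 a2 : ℝ) : Prop :=
  (!![y2 - Y12, 0, 0, a2;
      0, Y12, x1 - a1, x2 - a2;
      0, x1 - a1, x1 - a1, X12;
      a2, x2 - a2, X12, X22] : Matrix (Fin 4) (Fin 4) ℝ).PosSemidef

/-- PSD condition (P5). -/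
def P5cond (x1 x2 X11 X12 X22 y1 y2 Y12 a1 a2 : ℝ) : Prop :=
  (!![y1 - Y12, 0, 0, a1, 0;
      0, y2 - Y12, 0, 0, a2;
      0, 0, Y12, x1 - a1, x2 - a2;
      a1, 0, x1 - a1, X11, X12;
      0, a2, x2 - a2, X12, X22] : Matrix (Fin 5) (Fin 5) ℝ).PosSemidef

/-- Moments of distributions on the unit square. -/
inductive Bx : ℝ → ℝ → ℝ → ℝ → ℝ → Prop
  | pt (x y : ℝ) (h1 : 0 ≤ x) (h2 : x ≤ 1) (h3 : 0 ≤ y) (h4 : y ≤ 1) :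
      Bx x y (x * x) (x * y) (y * y)
  | mix (s t a b A c B a' b' A' c' B' : ℝ) (hs : 0 ≤ s) (ht : 0 ≤ t) (hst : s + t = 1)
      (h : Bx a b A c B) (h' : Bx a' b' A' c' B') :
      Bx (s * a + t * a') (s * b + t * b') (s * A + t * A') (s * c + t * c') (s * B + t * B')

lemma Bx.cast {a b A c B a' b' A' c' B' : ℝ} (h : Bx a b A c B) (h1 : a = a') (h2 : b = b')
    (h3 : A = A') (h4 : c = c') (h5 : B = B') : Bx a' b' A' c' B' := by
  subst h1 h2 h3 h4 h5; exact h

lemma Bx.refl1 {a b A c B : ℝ} (h : Bx a b A c B) : Bx (1 - a) b (1 - 2 * a + A) (b - c) B := by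
  induction h with
  | pt x y h1 h2 h3 h4 =>
    exact (Bx.pt (1 - x) y (by linarith) (by linarith) h3 h4).cast rfl rfl (by ring) (by ring) rfl
  | mix s t a b A c B a' b' A' c' B' hs ht hst h h' ih ih' =>
    obtain rfl : t = 1 - s := by linarith
    exact (Bx.mix s (1 - s) _ _ _ _ _ _ _ _ _ _ hs ht hst ih ih').cast
      (by ring) (by ring) (by ring) (by ring) (by ring)

lemma Bx.swap {a b A c B : ℝ} (h : Bx a b A c B) : Bx b a B c A := by
  induction h with
  | pt x y h1 h2 h3 h4 =>
    exact (Bx.pt y x h3 h4 h1 h2).cast rfl rfl (by ring) (by ring) rfl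
  | mix s t a b A c B a' b' A' c' B' hs ht hst h h' ih ih' =>
    exact (Bx.mix s t _ _ _ _ _ _ _ _ _ _ hs ht hst ih ih')

lemma Bx.refl2 {a b A c B : ℝ} (h : Bx a b A c B) : Bx a (1 - b) A (a - c) (1 - 2 * b + B) :=
  h.swap.refl1.swap

lemma oneD {a A : ℝ} (h1 : a ^ 2 ≤ A) (h2 : A ≤ a) :
    ∃ t s : ℝ, 0 ≤ t ∧ t ≤ 1 ∧ 0 ≤ s ∧ s ≤ 1 ∧ t * s = a ∧ t * s ^ 2 = A ∧
      t * A = a ^ 2 ∧ (A = 0 → t = 0) := by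
  have hA : 0 ≤ A := le_trans (sq_nonneg a) h1
  rcases hA.eq_or_lt with h | h
  · have : a = 0 := by
      have : a ^ 2 = 0 := le_antisymm (by linarith) (sq_nonneg a)
      simpa using this
    exact ⟨0, 0, by simp, by simp, by simp, by simp, by simp [this], by simp [h.symm],
      by simp [this], by simp⟩
  · have ha : 0 < a := by linarith
    refine ⟨a ^ 2 / A, A / a, by positivity, (div_le_one h).2 h1, by positivity,
      (div_le_one ha).2 h2, by field_simp, by field_simp, by field_simp, fun h' => ?_⟩
    exact absurd h' h.ne'

/-- the case of vanishing cross moment -/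
lemma Bx.zero {a b A B : ℝ} (hA : a ^ 2 ≤ A) (hA' : A ≤ a) (hB : b ^ 2 ≤ B) (hB' : B ≤ b)
    (hd : (a * b) ^ 2 ≤ (A - a ^ 2) * (B - b ^ 2)) : Bx a b A 0 B := by
  obtain ⟨t, s, ht, ht1, hs, hs1, e1, e2, e3, e0⟩ := oneD hA hA'
  obtain ⟨r, q, hr, hr1, hq, hq1, f1, f2, f3, f0⟩ := oneD hB hB'
  have hA0 : 0 ≤ A := le_trans (sq_nonneg a) hA
  have hB0 : 0 ≤ B := le_trans (sq_nonneg b) hB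
  have htr : t + r ≤ 1 := by
    rcases hA0.eq_or_lt with h | h
    · rw [e0 h.symm]; linarith
    rcases hB0.eq_or_lt with h' | h'
    · rw [f0 h'.symm]; linarith
    have : 0 ≤ (A * B) * (1 - t - r) := by
      have : (A * B) * (1 - t - r) = (A - a ^ 2) * (B - b ^ 2) - (a * b) ^ 2 := by
        rw [← e3, ← f3, mul_pow, ← e3, ← f3]; ring
      rw [this]; linarith
    have := nonneg_of_mul_nonneg_right this (by positivity)
    linarith
  have hP := Bx.pt s 0 hs hs1 le_rfl zero_le_one
  have hQ := Bx.pt 0 q le_rfl zero_le_one hq hq1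
  have hO := Bx.pt 0 0 le_rfl zero_le_one le_rfl zero_le_one
  rcases eq_or_lt_of_le ht1 with h | h
  · have hr0 : r = 0 := by linarith
    subst h
    subst hr0
    exact hP.cast (by linarith) (by linarith) (by linarith) (by ring) (by linarith)
  · have h1 : 0 < 1 - t := by linarith
    have hk : r / (1 - t) ≤ 1 := (div_le_one h1).2 (by linarith)
    have hm := Bx.mix (r / (1 - t)) (1 - r / (1 - t)) _ _ _ _ _ _ _ _ _ _ (by positivity)
      (by linarith) (by ring) hQ hO
    have hk2 : (1 - t) * (r / (1 - t)) = r := by field_simp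
    generalize r / (1 - t) = k at *
    refine (Bx.mix t (1 - t) _ _ _ _ _ _ _ _ _ _ ht (by linarith) (by ring) hP hm).cast ?_ ?_ ?_ ?_ ?_
    · linear_combination e1
    · linear_combination f1 + q * hk2
    · linear_combination e2
    · ring
    · linear_combination f2 + q ^ 2 * hk2

/-- the degenerate case: distribution on a line -/
lemma Bx.line {a b s r : ℝ} (ha : 0 ≤ a) (ha1 : a ≤ 1) (hb : 0 ≤ b) (hb1 : b ≤ 1)
    (hs : 0 ≤ s) (hr : 0 ≤ r) (h1 : s * s ≤ a * (1 - a)) (h2 : r * r ≤ b * (1 - b))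
    (h3 : s * r ≤ a * (1 - b)) (h4 : s * r ≤ b * (1 - a)) :
    Bx a b (a ^ 2 + s ^ 2) (a * b + s * r) (b ^ 2 + r ^ 2) := by
  have key : ∃ q : ℝ, 0 < q ∧ q * s ≤ 1 - a ∧ q * r ≤ 1 - b ∧ s / q ≤ a ∧ r / q ≤ b := by
    have z1 : a = 0 → s = 0 := fun h => by subst h; nlinarith
    have z2 : b = 0 → r = 0 := fun h => by subst h; nlinarith
    by_cases h0 : s = 0 ∧ r = 0
    · exact ⟨1, one_pos, by simp [h0.1, ha1], by simp [h0.2, hb1], by simp [h0.1, ha],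
        by simp [h0.2, hb]⟩
    have hfs : s = s / a * a := by
      by_cases h : a = 0
      · simp [z1 h]
      · field_simp
    have hfr : r = r / b * b := by
      by_cases h : b = 0
      · simp [z2 h]
      · field_simp
    have hs' : 0 ≤ s / a := by positivity
    have hr' : 0 ≤ r / b := by positivity
    rcases le_total (r / b) (s / a) with h | h
    · have hp : 0 < s / a := by
        rcases hs'.eq_or_lt with h' | h'
        · exfalso; apply h0
          rw [hfs, hfr, ← h']
          have : r / b = 0 := by linarith
          simp [this]
        · exact h'
      have ha' : 0 < a := lt_of_le_of_ne ha (fun h => by simp [← h] at hp)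
      refine ⟨s / a, hp, ?_, ?_, ?_, ?_⟩
      · rw [div_mul_eq_mul_div, div_le_iff₀ ha']; linarith
      · rw [div_mul_eq_mul_div, div_le_iff₀ ha']; linarith
      · rw [div_le_iff₀ hp]; linarith
      · rw [div_le_iff₀ hp]; nlinarith
    · have hp : 0 < r / b := by
        rcases hr'.eq_or_lt with h' | h'
        · exfalso; apply h0
          rw [hfs, hfr, ← h']
          have : s / a = 0 := by linarith
          simp [this]
        · exact h'
      have hb' : 0 < b := lt_of_le_of_ne hb (fun h => by simp [← h] at hp)
      refine ⟨r / b, hp, ?_, ?_, ?_, ?_⟩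
      · rw [div_mul_eq_mul_div, div_le_iff₀ hb']; linarith
      · rw [div_mul_eq_mul_div, div_le_iff₀ hb']; linarith
      · rw [div_le_iff₀ hp]; nlinarith
      · rw [div_le_iff₀ hp]; linarith
  obtain ⟨q, hq, k1, k2, k3, k4⟩ := key
  have hqs : 0 ≤ q * s := by positivity
  have hqr : 0 ≤ q * r := by positivity
  have hqs' : 0 ≤ s / q := by positivity
  have hqr' : 0 ≤ r / q := by positivity
  have hP := Bx.pt (a + q * s) (b + q * r) (by linarith) (by linarith) (by linarith) (by linarith)
  have hQ := Bx.pt (a - s / q) (b - r / q) (by linarith) (by linarith) (by linarith) (by linarith)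
  refine (Bx.mix (1 / (1 + q ^ 2)) (q ^ 2 / (1 + q ^ 2)) _ _ _ _ _ _ _ _ _ _ (by positivity)
    (by positivity) (by field_simp) hP hQ).cast ?_ ?_ ?_ ?_ ?_ <;> field_simp <;> ring

/-- upper half: move the covariance up to an extreme value -/
lemma Bx.upper {a b A c B : ℝ} (hA : a ^ 2 ≤ A) (hA' : A ≤ a) (hB : b ^ 2 ≤ B) (hB' : B ≤ b)
    (hd : (c - a * b) ^ 2 ≤ (A - a ^ 2) * (B - b ^ 2)) (hc1 : c ≤ a) (hc2 : c ≤ b) :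
    ∃ c', c ≤ c' ∧ Bx a b A c' B := by
  have ha : 0 ≤ a := by nlinarith [sq_nonneg a]
  have ha1 : a ≤ 1 := by by_contra h; nlinarith
  have hb : 0 ≤ b := by nlinarith [sq_nonneg b]
  have hb1 : b ≤ 1 := by by_contra h; nlinarith
  have e1 : √(A - a ^ 2) ^ 2 = A - a ^ 2 := Real.sq_sqrt (by linarith)
  have e2 : √(B - b ^ 2) ^ 2 = B - b ^ 2 := Real.sq_sqrt (by linarith)
  have p1 := Real.sqrt_nonneg (A - a ^ 2)
  have p2 := Real.sqrt_nonneg (B - b ^ 2)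
  set s := √(A - a ^ 2)
  set r := √(B - b ^ 2)
  have hcs : c - a * b ≤ s * r := by
    apply le_of_abs_le
    apply abs_le_of_sq_le_sq _ (mul_nonneg p1 p2); rw [mul_pow, e1, e2]; exact hd
  by_cases h3 : s * r ≤ a * (1 - b) ∧ s * r ≤ b * (1 - a)
  · refine ⟨a * b + s * r, by linarith, ?_⟩
    exact (Bx.line ha ha1 hb hb1 p1 p2 (by nlinarith) (by nlinarith) h3.1 h3.2).cast rfl rfl
      (by linarith) rfl (by linarith)
  · -- the upper end is min a b
    have hsr : (s * r) ^ 2 = (A - a ^ 2) * (B - b ^ 2) := by rw [mul_pow, e1, e2]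
    rcases le_total a b with hab | hab
    · have h5 : a * (1 - b) ≤ s * r := by
        by_contra h6
        apply h3
        constructor <;> nlinarith
      refine ⟨a, hc1, ?_⟩
      have h7 : (a * (1 - b)) ^ 2 ≤ (s * r) ^ 2 :=
        pow_le_pow_left₀ (mul_nonneg ha (by linarith)) h5 2
      have := (Bx.zero (a := a) (b := 1 - b) (A := A) (B := 1 - 2 * b + B) hA hA'
        (by nlinarith) (by linarith) (by rw [hsr] at h7; linarith)).refl2
      exact this.cast rfl (by ring) rfl (by ring) (by ring)
    · have h5 : b * (1 - a) ≤ s * r := by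
        by_contra h6
        apply h3
        constructor <;> nlinarith
      refine ⟨b, hc2, ?_⟩
      have h7 : (b * (1 - a)) ^ 2 ≤ (s * r) ^ 2 :=
        pow_le_pow_left₀ (mul_nonneg hb (by linarith)) h5 2
      have := (Bx.zero (a := 1 - a) (b := b) (A := 1 - 2 * a + A) (B := B)
        (by nlinarith) (by linarith) hB hB' (by rw [hsr] at h7; linarith)).refl1
      exact this.cast (by ring) rfl (by ring) (by ring) rfl

lemma Bx.main {a b A c B : ℝ} (hA : a ^ 2 ≤ A) (hA' : A ≤ a) (hB : b ^ 2 ≤ B) (hB' : B ≤ b)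
    (hd : (c - a * b) ^ 2 ≤ (A - a ^ 2) * (B - b ^ 2)) (hc1 : c ≤ a) (hc2 : c ≤ b)
    (hc3 : 0 ≤ c) (hc4 : a + b - 1 ≤ c) : Bx a b A c B := by
  obtain ⟨c1, h1, k1⟩ := Bx.upper hA hA' hB hB' hd hc1 hc2
  obtain ⟨c2, h2, k2⟩ := Bx.upper (a := 1 - a) (A := 1 - 2 * a + A) (c := b - c)
    (by nlinarith) (by linarith) hB hB' (by nlinarith) (by linarith) (by linarith)
  have k2 : Bx a b A (b - c2) B := k2.refl1.cast (by ring) rfl (by ring) rfl rfl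
  rcases h1.eq_or_lt with h | h
  · exact h ▸ k1
  have hp : 0 < c1 - (b - c2) := by linarith
  refine (Bx.mix ((c - (b - c2)) / (c1 - (b - c2))) ((c1 - c) / (c1 - (b - c2)))
    _ _ _ _ _ _ _ _ _ _ (div_nonneg (by linarith) hp.le) (div_nonneg (by linarith) hp.le)
    (by field_simp; ring) k1 k2).cast ?_ ?_ ?_ ?_ ?_ <;> field_simp <;> ring

lemma P3_iff (x1 x2 X11 X12 X22 y1 y2 Y12 a1 a2 : ℝ) :
    P3cond x1 x2 X11 X12 X22 y1 y2 Y12 a1 a2 ↔ ∀ z0 z1 z2 : ℝ,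
      0 ≤ Y12 * z0 ^ 2 + 2 * (x1 - a1) * (z0 * z1) + 2 * (x2 - a2) * (z0 * z2)
        + (x1 - a1) * z1 ^ 2 + 2 * X12 * (z1 * z2) + (x2 - a2) * z2 ^ 2 := by
  unfold P3cond
  rw [posSemidef_iff_dotProduct_mulVec]
  constructor
  · rintro ⟨-, h⟩ z0 z1 z2
    have := h ![z0, z1, z2]
    simp [dotProduct, mulVec, Fin.sum_univ_succ] at this
    linarith
  · intro h
    refine ⟨?_, fun z => ?_⟩
    · ext i j; fin_cases i <;> fin_cases j <;> simp
    · have := h (z 0) (z 1) (z 2)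
      simp [dotProduct, mulVec, Fin.sum_univ_succ]
      linarith

lemma P4a_iff (x1 x2 X11 X12 X22 y1 y2 Y12 a1 a2 : ℝ) :
    P4acond x1 x2 X11 X12 X22 y1 y2 Y12 a1 a2 ↔ ∀ v z0 z1 z2 : ℝ,
      0 ≤ (y1 - Y12) * v ^ 2 + 2 * a1 * (v * z1) +
        Y12 * z0 ^ 2 + 2 * (x1 - a1) * (z0 * z1) + 2 * (x2 - a2) * (z0 * z2)
        + X11 * z1 ^ 2 + 2 * X12 * (z1 * z2) + (x2 - a2) * z2 ^ 2 := by
  unfold P4acond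
  rw [posSemidef_iff_dotProduct_mulVec]
  constructor
  · rintro ⟨-, h⟩ v z0 z1 z2
    have := h ![v, z0, z1, z2]
    simp [dotProduct, mulVec, Fin.sum_univ_succ] at this
    linarith
  · intro h
    refine ⟨?_, fun z => ?_⟩
    · ext i j; fin_cases i <;> fin_cases j <;> simp
    · have := h (z 0) (z 1) (z 2) (z 3)
      simp [dotProduct, mulVec, Fin.sum_univ_succ]
      have e : Fin.succ (2 : Fin 3) = 3 := rfl
      try simp only [e]
      linarith

lemma P4b_iff (x1 x2 X11 X12 X22 y1 y2 Y12 a1 a2 : ℝ) :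
    P4bcond x1 x2 X11 X12 X22 y1 y2 Y12 a1 a2 ↔ ∀ v z0 z1 z2 : ℝ,
      0 ≤ (y2 - Y12) * v ^ 2 + 2 * a2 * (v * z2) +
        Y12 * z0 ^ 2 + 2 * (x1 - a1) * (z0 * z1) + 2 * (x2 - a2) * (z0 * z2)
        + (x1 - a1) * z1 ^ 2 + 2 * X12 * (z1 * z2) + X22 * z2 ^ 2 := by
  unfold P4bcond
  rw [posSemidef_iff_dotProduct_mulVec]
  constructor
  · rintro ⟨-, h⟩ v z0 z1 z2
    have := h ![v, z0, z1, z2]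
    simp [dotProduct, mulVec, Fin.sum_univ_succ] at this
    linarith
  · intro h
    refine ⟨?_, fun z => ?_⟩
    · ext i j; fin_cases i <;> fin_cases j <;> simp
    · have := h (z 0) (z 1) (z 2) (z 3)
      simp [dotProduct, mulVec, Fin.sum_univ_succ]
      have e : Fin.succ (2 : Fin 3) = 3 := rfl
      try simp only [e]
      linarith

lemma P5_iff (x1 x2 X11 X12 X22 y1 y2 Y12 a1 a2 : ℝ) :
    P5cond x1 x2 X11 X12 X22 y1 y2 Y12 a1 a2 ↔ ∀ v w z0 z1 z2 : ℝ,
      0 ≤ (y1 - Y12) * v ^ 2 + 2 * a1 * (v * z1) + (y2 - Y12) * w ^ 2 + 2 * a2 * (w * z2) +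
        Y12 * z0 ^ 2 + 2 * (x1 - a1) * (z0 * z1) + 2 * (x2 - a2) * (z0 * z2)
        + X11 * z1 ^ 2 + 2 * X12 * (z1 * z2) + X22 * z2 ^ 2 := by
  unfold P5cond
  rw [posSemidef_iff_dotProduct_mulVec]
  constructor
  · rintro ⟨-, h⟩ v w z0 z1 z2
    have := h ![v, w, z0, z1, z2]
    simp [dotProduct, mulVec, Fin.sum_univ_succ] at this
    linarith
  · intro h
    refine ⟨?_, fun z => ?_⟩
    · ext i j; fin_cases i <;> fin_cases j <;> simp
    · have := h (z 0) (z 1) (z 2) (z 3) (z 4)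
      simp [dotProduct, mulVec, Fin.sum_univ_succ]
      have e : Fin.succ (2 : Fin 4) = 3 := rfl
      have eb : Fin.succ (Fin.succ (2 : Fin 3)) = 4 := rfl
      have ec : Fin.succ (3 : Fin 4) = 4 := rfl
      try simp only [e, eb, ec]
      linarith

/-- all conditions, with the PSD conditions as quadratic forms -/
def AllC (x1 x2 X11 X12 X22 y1 y2 Y12 a1 a2 : ℝ) : Prop :=
  Lcond x1 x2 X11 X12 X22 y1 y2 Y12 a1 a2 ∧ P3cond x1 x2 X11 X12 X22 y1 y2 Y12 a1 a2 ∧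
  P4acond x1 x2 X11 X12 X22 y1 y2 Y12 a1 a2 ∧ P4bcond x1 x2 X11 X12 X22 y1 y2 Y12 a1 a2 ∧
  P5cond x1 x2 X11 X12 X22 y1 y2 Y12 a1 a2

lemma comb_le {s t a b c d : ℝ} (hs : 0 ≤ s) (ht : 0 ≤ t) (h1 : a ≤ b) (h2 : c ≤ d) :
    s * a + t * c ≤ s * b + t * d :=
  add_le_add (mul_le_mul_of_nonneg_left h1 hs) (mul_le_mul_of_nonneg_left h2 ht)

lemma AllC.mix {x1 x2 X11 X12 X22 y1 y2 Y12 a1 a2 x1' x2' X11' X12' X22' y1' y2' Y12' a1' a2' : ℝ}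
    {s t : ℝ} (hs : 0 ≤ s) (ht : 0 ≤ t) (hst : s + t = 1)
    (h : AllC x1 x2 X11 X12 X22 y1 y2 Y12 a1 a2)
    (h' : AllC x1' x2' X11' X12' X22' y1' y2' Y12' a1' a2') :
    AllC (s * x1 + t * x1') (s * x2 + t * x2') (s * X11 + t * X11') (s * X12 + t * X12')
      (s * X22 + t * X22') (s * y1 + t * y1') (s * y2 + t * y2') (s * Y12 + t * Y12')
      (s * a1 + t * a1') (s * a2 + t * a2') := by
  obtain ⟨hL, h3, h4, h5, h6⟩ := h
  obtain ⟨hL', h3', h4', h5', h6'⟩ := h'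
  refine ⟨?_, ?_, ?_, ?_, ?_⟩
  · unfold Lcond at *
    simp only [max_le_iff, le_min_iff] at *
    obtain ⟨l1, l2, l3, l4, ⟨l5, l6⟩, ⟨l7, l8⟩, l9, l10, l11, l12, ⟨l13, l14⟩, l15, l16⟩ := hL
    obtain ⟨m1, m2, m3, m4, ⟨m5, m6⟩, ⟨m7, m8⟩, m9, m10, m11, m12, ⟨m13, m14⟩, m15, m16⟩ := hL'
    have n1 := comb_le hs ht l1 m1
    have n2 := comb_le hs ht l2 m2
    have n3 := comb_le hs ht l3 m3
    have n4 := comb_le hs ht l4 m4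
    have n5 := comb_le hs ht l5 m5
    have n6 := comb_le hs ht l6 m6
    have n7 := comb_le hs ht l7 m7
    have n8 := comb_le hs ht l8 m8
    have n9 := comb_le hs ht l9 m9
    have n10 := comb_le hs ht l10 m10
    have n11 := comb_le hs ht l11 m11
    have n12 := comb_le hs ht l12 m12
    have n13 := comb_le hs ht l13 m13
    have n14 := comb_le hs ht l14 m14
    have n15 := comb_le hs ht l15 m15
    have n16 := comb_le hs ht l16 m16
    refine ⟨?_, ?_, ?_, ?_, ⟨?_, ?_⟩, ⟨?_, ?_⟩, ?_, ?_, ?_, ?_, ⟨?_, ?_⟩, ?_, ?_⟩ <;> linarith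
  · rw [P3_iff] at *
    intro z0 z1 z2
    have := comb_le hs ht (h3 z0 z1 z2) (h3' z0 z1 z2)
    linarith
  · rw [P4a_iff] at *
    intro v z0 z1 z2
    have := comb_le hs ht (h4 v z0 z1 z2) (h4' v z0 z1 z2)
    linarith
  · rw [P4b_iff] at *
    intro v z0 z1 z2
    have := comb_le hs ht (h5 v z0 z1 z2) (h5' v z0 z1 z2)
    linarith
  · rw [P5_iff] at *
    intro v w z0 z1 z2
    have := comb_le hs ht (h6 v w z0 z1 z2) (h6' v w z0 z1 z2)
    linarith

lemma AllC.pt {x1 x2 y1 y2 : ℝ} (h1 : 0 ≤ x1) (h1' : x1 ≤ y1) (h2 : 0 ≤ x2) (h2' : x2 ≤ y2)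
    (hy1 : y1 = 0 ∨ y1 = 1) (hy2 : y2 = 0 ∨ y2 = 1) :
    AllC x1 x2 (x1 * x1) (x1 * x2) (x2 * x2) y1 y2 (y1 * y2) (x1 * (1 - y2)) (x2 * (1 - y1)) := by
  unfold AllC
  rw [P3_iff, P4a_iff, P4b_iff, P5_iff]
  unfold Lcond
  simp only [max_le_iff, le_min_iff]
  rcases hy1 with rfl | rfl <;> rcases hy2 with rfl | rfl
  · obtain rfl : x1 = 0 := le_antisymm h1' h1
    obtain rfl : x2 = 0 := le_antisymm h2' h2
    norm_num
  · obtain rfl : x1 = 0 := le_antisymm h1' h1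
    refine ⟨⟨?_, ?_, ?_, ?_, ⟨?_, ?_⟩, ⟨?_, ?_⟩, ?_, ?_, ?_, ?_, ⟨?_, ?_⟩, ?_, ?_⟩, ?_, ?_, ?_, ?_⟩
    any_goals nlinarith
    · intros; norm_num
    · intro v z0 z1 z2; norm_num
    · intro v z0 z1 z2; nlinarith [sq_nonneg (v + x2 * z2)]
    · intro v w z0 z1 z2; nlinarith [sq_nonneg (w + x2 * z2)]
  · obtain rfl : x2 = 0 := le_antisymm h2' h2
    refine ⟨⟨?_, ?_, ?_, ?_, ⟨?_, ?_⟩, ⟨?_, ?_⟩, ?_, ?_, ?_, ?_, ⟨?_, ?_⟩, ?_, ?_⟩, ?_, ?_, ?_, ?_⟩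
    any_goals nlinarith
    · intros; norm_num
    · intro v z0 z1 z2; nlinarith [sq_nonneg (v + x1 * z1)]
    · intro v z0 z1 z2; norm_num
    · intro v w z0 z1 z2; nlinarith [sq_nonneg (v + x1 * z1)]
  · have k1 : 0 ≤ x1 - x1 ^ 2 := by nlinarith
    have k2 : 0 ≤ x2 - x2 ^ 2 := by nlinarith
    refine ⟨⟨?_, ?_, ?_, ?_, ⟨?_, ?_⟩, ⟨?_, ?_⟩, ?_, ?_, ?_, ?_, ⟨?_, ?_⟩, ?_, ?_⟩, ?_, ?_, ?_, ?_⟩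
    any_goals nlinarith
    · intro z0 z1 z2
      linarith [sq_nonneg (z0 + x1 * z1 + x2 * z2), mul_nonneg k1 (sq_nonneg z1),
        mul_nonneg k2 (sq_nonneg z2)]
    · intro v z0 z1 z2
      linarith [sq_nonneg (z0 + x1 * z1 + x2 * z2), mul_nonneg k2 (sq_nonneg z2)]
    · intro v z0 z1 z2
      linarith [sq_nonneg (z0 + x1 * z1 + x2 * z2), mul_nonneg k1 (sq_nonneg z1)]
    · intro v w z0 z1 z2
      linarith [sq_nonneg (z0 + x1 * z1 + x2 * z2)]

/-- membership in `Hset` in coordinates -/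
def Hm (x1 x2 X11 X12 X22 y1 y2 Y : ℝ) : Prop :=
  ((![x1, x2], !![X11, X12; X12, X22], ![y1, y2], Y) :
    (Fin 2 → ℝ) × Matrix (Fin 2) (Fin 2) ℝ × (Fin 2 → ℝ) × ℝ) ∈ Hset

lemma Hm.pt (x1 x2 y1 y2 : ℝ) (h1 : 0 ≤ x1) (h1' : x1 ≤ y1) (h2 : 0 ≤ x2) (h2' : x2 ≤ y2)
    (hy1 : y1 = 0 ∨ y1 = 1) (hy2 : y2 = 0 ∨ y2 = 1) :
    Hm x1 x2 (x1 * x1) (x1 * x2) (x2 * x2) y1 y2 (y1 * y2) := by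
  apply subset_convexHull
  refine ⟨![x1, x2], ![y1, y2], ?_, ?_, ?_, ?_⟩
  · intro i; fin_cases i <;> simpa
  · intro i; fin_cases i <;> simpa
  · intro i; fin_cases i <;> simpa
  · refine Prod.ext rfl (Prod.ext ?_ (Prod.ext rfl ?_))
    · ext i j; fin_cases i <;> fin_cases j <;> simp [vecMulVec, mul_comm]
    · simp

lemma Hm.mix {s t x1 x2 X11 X12 X22 y1 y2 Y x1' x2' X11' X12' X22' y1' y2' Y' : ℝ}
    (hs : 0 ≤ s) (ht : 0 ≤ t) (hst : s + t = 1) (h : Hm x1 x2 X11 X12 X22 y1 y2 Y)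
    (h' : Hm x1' x2' X11' X12' X22' y1' y2' Y') :
    Hm (s * x1 + t * x1') (s * x2 + t * x2') (s * X11 + t * X11') (s * X12 + t * X12')
      (s * X22 + t * X22') (s * y1 + t * y1') (s * y2 + t * y2') (s * Y + t * Y') := by
  have := (convex_convexHull ℝ _) h h' hs ht hst
  unfold Hm Hset
  convert this using 1
  refine Prod.ext ?_ (Prod.ext ?_ (Prod.ext ?_ ?_))
  · ext i; fin_cases i <;> simp
  · ext i j; fin_cases i <;> fin_cases j <;> simp
  · ext i; fin_cases i <;> simp
  · simp

lemma Hm.cast {x1 x2 X11 X12 X22 y1 y2 Y x1' x2' X11' X12' X22' y1' y2' Y' : ℝ}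
    (h : Hm x1 x2 X11 X12 X22 y1 y2 Y) (e1 : x1 = x1') (e2 : x2 = x2') (e3 : X11 = X11')
    (e4 : X12 = X12') (e5 : X22 = X22') (e6 : y1 = y1') (e7 : y2 = y2') (e8 : Y = Y') :
    Hm x1' x2' X11' X12' X22' y1' y2' Y' := by
  subst e1 e2 e3 e4 e5 e6 e7 e8; exact h

lemma Bx.toHm {a b A c B : ℝ} (h : Bx a b A c B) : Hm a b A c B 1 1 1 := by
  induction h with
  | pt x y h1 h2 h3 h4 =>
    exact (Hm.pt x y 1 1 h1 h2 h3 h4 (Or.inr rfl) (Or.inr rfl)).cast rfl rfl rfl rfl rfl rfl rfl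
      (by ring)
  | mix s t a b A c B a' b' A' c' B' hs ht hst h h' ih ih' =>
    exact (Hm.mix hs ht hst ih ih').cast rfl rfl rfl rfl rfl (by linarith) (by linarith)
      (by linarith)

lemma Hm.one {a A : ℝ} (h1 : a ^ 2 ≤ A) (h2 : A ≤ a) : Hm a 0 A 0 0 1 0 0 := by
  obtain ⟨t, s, ht, ht1, hs, hs1, e1, e2, -, -⟩ := oneD h1 h2
  refine (Hm.mix ht (by linarith : 0 ≤ 1 - t) (by ring)
    (Hm.pt s 0 1 0 hs hs1 le_rfl le_rfl (Or.inr rfl) (Or.inl rfl))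
    (Hm.pt 0 0 1 0 le_rfl zero_le_one le_rfl le_rfl (Or.inr rfl) (Or.inl rfl))).cast
    ?_ ?_ ?_ ?_ ?_ ?_ ?_ ?_
  · linarith
  · ring
  · linarith
  all_goals ring

lemma Hm.two {a A : ℝ} (h1 : a ^ 2 ≤ A) (h2 : A ≤ a) : Hm 0 a 0 0 A 0 1 0 := by
  obtain ⟨t, s, ht, ht1, hs, hs1, e1, e2, -, -⟩ := oneD h1 h2
  refine (Hm.mix ht (by linarith : 0 ≤ 1 - t) (by ring)
    (Hm.pt 0 s 0 1 le_rfl le_rfl hs hs1 (Or.inl rfl) (Or.inr rfl))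
    (Hm.pt 0 0 0 1 le_rfl le_rfl le_rfl zero_le_one (Or.inl rfl) (Or.inr rfl))).cast
    ?_ ?_ ?_ ?_ ?_ ?_ ?_ ?_
  · ring
  · linarith
  · ring
  · ring
  · linarith
  all_goals ring

lemma scale1 {w a b : ℝ} (hw : 0 ≤ w) (h1 : a ^ 2 ≤ w * b) (h2 : b ≤ a) (h3 : 0 ≤ b) :
    ∃ a' b' : ℝ, w * a' = a ∧ w * b' = b ∧ a' ^ 2 ≤ b' ∧ b' ≤ a' := by
  rcases hw.eq_or_lt with h | h
  · have ha : a = 0 := by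
      have : a ^ 2 = 0 := le_antisymm (by rw [← h] at h1; linarith) (sq_nonneg a)
      simpa using this
    exact ⟨0, 0, by simp [ha], by simp; linarith, by simp, le_rfl⟩
  · refine ⟨a / w, b / w, by field_simp, by field_simp, ?_, ?_⟩
    · rw [div_pow, div_le_div_iff₀ (by positivity) h]; nlinarith
    · gcongr

lemma scale2 {w a b A c B : ℝ} (hw : 0 ≤ w)
    (hQ : ∀ z0 z1 z2 : ℝ, 0 ≤ w * z0 ^ 2 + 2 * a * (z0 * z1) + 2 * b * (z0 * z2) + A * z1 ^ 2
      + 2 * c * (z1 * z2) + B * z2 ^ 2)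
    (hA : A ≤ a) (hB : B ≤ b) (hc0 : 0 ≤ c) (hc1 : a + b - w ≤ c) (hc2 : c ≤ a) (hc3 : c ≤ b) :
    ∃ a' b' A' c' B' : ℝ, w * a' = a ∧ w * b' = b ∧ w * A' = A ∧ w * c' = c ∧ w * B' = B ∧
      Bx a' b' A' c' B' := by
  rcases hw.eq_or_lt with h | h
  · subst h
    have hA0 := hQ 0 1 0
    have hB0 := hQ 0 0 1
    have ha : a = 0 := by nlinarith [hQ (-1) 1 0]
    have hb : b = 0 := by nlinarith [hQ (-1) 0 1]
    refine ⟨0, 0, 0, 0, 0, ?_, ?_, ?_, ?_, ?_, ?_⟩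
    any_goals linarith
    exact (Bx.pt 0 0 le_rfl zero_le_one le_rfl zero_le_one).cast rfl rfl (by ring) (by ring)
      (by ring)
  · obtain ⟨a', rfl⟩ : ∃ a', a = w * a' := ⟨a / w, by field_simp⟩
    obtain ⟨b', rfl⟩ : ∃ a', b = w * a' := ⟨b / w, by field_simp⟩
    obtain ⟨A', rfl⟩ : ∃ a', A = w * a' := ⟨A / w, by field_simp⟩
    obtain ⟨B', rfl⟩ : ∃ a', B = w * a' := ⟨B / w, by field_simp⟩
    obtain ⟨c', rfl⟩ : ∃ a', c = w * a' := ⟨c / w, by field_simp⟩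
    refine ⟨a', b', A', c', B', rfl, rfl, rfl, rfl, rfl, ?_⟩
    have hQ' : ∀ z1 z2 : ℝ, 0 ≤ (A' - a' ^ 2) * z1 ^ 2 + 2 * (c' - a' * b') * (z1 * z2)
        + (B' - b' ^ 2) * z2 ^ 2 := by
      intro z1 z2
      refine nonneg_of_mul_nonneg_right (b := _) (a := w) ?_ h
      have := hQ (-(a' * z1 + b' * z2)) z1 z2
      linarith
    have hV1 := hQ' 1 0
    have hV2 := hQ' 0 1
    have hd := discrim_le_zero (a := A' - a' ^ 2) (b := 2 * (c' - a' * b')) (c := B' - b' ^ 2)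
      (fun z => by have := hQ' z 1; linarith)
    unfold discrim at hd
    refine Bx.main (by linarith) (le_of_mul_le_mul_left hA h) (by linarith)
      (le_of_mul_le_mul_left hB h) (by linarith) (le_of_mul_le_mul_left hc2 h)
      (le_of_mul_le_mul_left hc3 h) (nonneg_of_mul_nonneg_right hc0 h)
      (le_of_mul_le_mul_left ?_ h)
    linarith

lemma AllC.toHm {x1 x2 X11 X12 X22 y1 y2 Y a1 a2 : ℝ}
    (h : AllC x1 x2 X11 X12 X22 y1 y2 Y a1 a2) : Hm x1 x2 X11 X12 X22 y1 y2 Y := by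
  unfold AllC at h
  rw [P3_iff, P4a_iff, P4b_iff, P5_iff] at h
  unfold Lcond at h
  simp only [max_le_iff, le_min_iff] at h
  obtain ⟨⟨l1, l2, l3, l4, ⟨l5, l6⟩, ⟨l7, l8⟩, l9, l10, l11, l12, ⟨l13, l14⟩, l15, l16⟩,
    h3, h4, h5, h6⟩ := h
  have div1 : ∀ a w : ℝ, 0 ≤ a → a ≤ w → ∃ r : ℝ, w * r = a ∧ 0 ≤ r ∧ r ≤ 1 := by
    intro a w ha haw
    rcases (ha.trans haw).eq_or_lt with h | h
    · exact ⟨0, by linarith, le_rfl, zero_le_one⟩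
    · exact ⟨a / w, by field_simp, by positivity, (div_le_one h).2 haw⟩
  obtain ⟨r1, e1, r1p, r1l⟩ := div1 a1 _ l9 l10
  obtain ⟨r2, e2, r2p, r2l⟩ := div1 a2 _ l11 l12
  have s1l : r1 * a1 ≤ a1 := mul_le_of_le_one_left l9 r1l
  have s2l : r2 * a2 ≤ a2 := mul_le_of_le_one_left l11 r2l
  have s1p : 0 ≤ r1 * a1 := mul_nonneg r1p l9
  have s2p : 0 ≤ r2 * a2 := mul_nonneg r2p l11
  -- the part of the second moments that belongs to y = (1,1)
  obtain ⟨Z1, Z2, hZ1, hZ1', hZ1'', hZ2, hZ2', hZ2'', hQ⟩ : ∃ Z1 Z2 : ℝ, Z1 ≤ x1 - a1 ∧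
      Z1 ≤ X11 - r1 * a1 ∧ X11 - a1 ≤ Z1 ∧ Z2 ≤ x2 - a2 ∧ Z2 ≤ X22 - r2 * a2 ∧ X22 - a2 ≤ Z2 ∧
      ∀ z0 z1 z2 : ℝ, 0 ≤ Y * z0 ^ 2 + 2 * (x1 - a1) * (z0 * z1) + 2 * (x2 - a2) * (z0 * z2)
        + Z1 * z1 ^ 2 + 2 * X12 * (z1 * z2) + Z2 * z2 ^ 2 := by
    rcases le_total (x1 - a1) (X11 - r1 * a1) with c1 | c1 <;>
    rcases le_total (x2 - a2) (X22 - r2 * a2) with c2 | c2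
    · refine ⟨x1 - a1, x2 - a2, le_rfl, c1, by linarith, le_rfl, c2, by linarith, h3⟩
    · refine ⟨x1 - a1, X22 - r2 * a2, le_rfl, c1, by linarith, c2, le_rfl, by linarith, ?_⟩
      intro z0 z1 z2
      have := h5 (-(r2 * z2)) z0 z1 z2
      linear_combination this + (r2 * z2 ^ 2) * e2
    · refine ⟨X11 - r1 * a1, x2 - a2, c1, le_rfl, by linarith, le_rfl, c2, by linarith, ?_⟩
      intro z0 z1 z2
      have := h4 (-(r1 * z1)) z0 z1 z2
      linear_combination this + (r1 * z1 ^ 2) * e1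
    · refine ⟨X11 - r1 * a1, X22 - r2 * a2, c1, le_rfl, by linarith, c2, le_rfl, by linarith, ?_⟩
      intro z0 z1 z2
      have := h6 (-(r1 * z1)) (-(r2 * z2)) z0 z1 z2
      linear_combination this + (r1 * z1 ^ 2) * e1 + (r2 * z2 ^ 2) * e2
  obtain ⟨b1, B1, f1, f2, f3, f4⟩ := scale1 (w := y1 - Y) (a := a1) (b := X11 - Z1)
    (by linarith) (by
      have : (y1 - Y) * (r1 * a1) ≤ (y1 - Y) * (X11 - Z1) :=
        mul_le_mul_of_nonneg_left (by linarith) (by linarith)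
      have : (y1 - Y) * (r1 * a1) = a1 ^ 2 := by rw [← mul_assoc, e1]; ring
      linarith) (by linarith) (by linarith)
  obtain ⟨b2, B2, g1, g2, g3, g4⟩ := scale1 (w := y2 - Y) (a := a2) (b := X22 - Z2)
    (by linarith) (by
      have : (y2 - Y) * (r2 * a2) ≤ (y2 - Y) * (X22 - Z2) :=
        mul_le_mul_of_nonneg_left (by linarith) (by linarith)
      have : (y2 - Y) * (r2 * a2) = a2 ^ 2 := by rw [← mul_assoc, e2]; ring
      linarith) (by linarith) (by linarith)
  obtain ⟨a', b', A', c', B', k1, k2, k3, k4, k5, kB⟩ := scale2 l13 hQ hZ1 hZ2 l5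
    (by linarith) l7 l8
  have H11 := kB.toHm
  have H10 := Hm.one f3 f4
  have H01 := Hm.two g3 g4
  have H00 : Hm 0 0 0 0 0 0 0 0 := (Hm.pt 0 0 0 0 le_rfl le_rfl le_rfl le_rfl (Or.inl rfl)
    (Or.inl rfl)).cast rfl rfl (by ring) (by ring) (by ring) rfl rfl (by ring)
  have := (convex_convexHull ℝ _).sum_mem (t := (Finset.univ : Finset (Fin 4)))
    (w := ![Y, y1 - Y, y2 - Y, 1 - y1 - y2 + Y])
    (z := ![_, _, _, _]) ?_ ?_ (Fin.forall_fin_succ.2 ⟨fun _ => H11, Fin.forall_fin_succ.2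
      ⟨fun _ => H10, Fin.forall_fin_succ.2 ⟨fun _ => H01, Fin.forall_fin_succ.2
      ⟨fun _ => H00, fun i => i.elim0⟩⟩⟩⟩)
  · unfold Hm Hset
    convert this using 1
    refine Prod.ext ?_ (Prod.ext ?_ (Prod.ext ?_ ?_))
    · ext i; fin_cases i <;> simp [Fin.sum_univ_succ] <;> linarith
    · ext i j; fin_cases i <;> fin_cases j <;> simp [Fin.sum_univ_succ] <;> linarith
    · ext i; fin_cases i <;> simp [Fin.sum_univ_succ]
    · simp [Fin.sum_univ_succ]
  · intro i _
    fin_cases i <;> simp <;> linarith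
  · simp [Fin.sum_univ_succ]

/-- 𝓗 equals the projection onto (x, X, y, Y₁₂) of the points (x, X, y, Y₁₂, α)
satisfying (L), (P3), (P4a), (P4b), (P5). -/
theorem stmt4 :
    Hset = {p : (Fin 2 → ℝ) × Matrix (Fin 2) (Fin 2) ℝ × (Fin 2 → ℝ) × ℝ |
      p.2.1.IsSymm ∧ ∃ a : Fin 2 → ℝ,
        Lcond (p.1 0) (p.1 1) (p.2.1 0 0) (p.2.1 0 1) (p.2.1 1 1)
          (p.2.2.1 0) (p.2.2.1 1) p.2.2.2 (a 0) (a 1) ∧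
        P3cond (p.1 0) (p.1 1) (p.2.1 0 0) (p.2.1 0 1) (p.2.1 1 1)
          (p.2.2.1 0) (p.2.2.1 1) p.2.2.2 (a 0) (a 1) ∧
        P4acond (p.1 0) (p.1 1) (p.2.1 0 0) (p.2.1 0 1) (p.2.1 1 1)
          (p.2.2.1 0) (p.2.2.1 1) p.2.2.2 (a 0) (a 1) ∧
        P4bcond (p.1 0) (p.1 1) (p.2.1 0 0) (p.2.1 0 1) (p.2.1 1 1)
          (p.2.2.1 0) (p.2.2.1 1) p.2.2.2 (a 0) (a 1) ∧
        P5cond (p.1 0) (p.1 1) (p.2.1 0 0) (p.2.1 0 1) (p.2.1 1 1)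
          (p.2.2.1 0) (p.2.2.1 1) p.2.2.2 (a 0) (a 1)} := by
  apply Set.Subset.antisymm
  · apply convexHull_min
    · rintro _ ⟨x, y, h0, h1, h2, rfl⟩
      refine ⟨?_, ![x 0 * (1 - y 1), x 1 * (1 - y 0)], ?_⟩
      · ext i j; simp [vecMulVec, mul_comm]
      · exact AllC.pt (h0 0) (h1 0) (h0 1) (h1 1) (h2 0) (h2 1)
    · rintro p ⟨hp, a, ha⟩ q ⟨hq, b, hb⟩ s t hs ht hst
      refine ⟨?_, s • a + t • b, ?_⟩
      · exact (hp.smul s).add (hq.smul t)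
      · exact AllC.mix hs ht hst ha hb
  · rintro ⟨x, X, y, Y⟩ ⟨hp, a, ha⟩
    have h := AllC.toHm ha
    unfold Hm at h
    convert h using 1
    refine Prod.ext ?_ (Prod.ext ?_ (Prod.ext ?_ rfl))
    · ext i; fin_cases i <;> rfl
    · ext i j
      fin_cases i <;> fin_cases j <;> simp
      exact hp.apply 0 1
    · ext i; fin_cases i <;> rfl
end
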